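/- arXiv:2404.14702 — 5 statements merged into one kernel-verified Lean document; each statement's English description precedes it below -/
import Mathlib

section
/- Positive integers b ≤ c satisfy 1 + b² + c² = 3·b·c if and only if either b = c = 1, or there exists a natural number k with b = Fib(2k+1) and c = Fib(2k+3). (The solutions of the Markov equation with smallest entry 1 correspond exactly to pairs of consecutive odd-index Fibonacci numbers.) -/
theorem fib_step_aux (k : ℕ) :
    Nat.fib (2 * (k + 1) + 3) + Nat.fib (2 * k + 1) = 3 * Nat.fib (2 * k + 3) := by
  have h1 : Nat.fib (2 * (k + 1) + 3) = Nat.fib (2 * k + 3) + Nat.fib (2 * k + 4) :=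
    Nat.fib_add_two (n := 2 * k + 3)
  have h2 : Nat.fib (2 * k + 4) = Nat.fib (2 * k + 2) + Nat.fib (2 * k + 3) :=
    Nat.fib_add_two (n := 2 * k + 2)
  have h3 : Nat.fib (2 * k + 3) = Nat.fib (2 * k + 1) + Nat.fib (2 * k + 2) :=
    Nat.fib_add_two (n := 2 * k + 1)
  omega

theorem fib_markov_aux (k : ℕ) :
    1 + Nat.fib (2 * k + 1) ^ 2 + Nat.fib (2 * k + 3) ^ 2
      = 3 * Nat.fib (2 * k + 1) * Nat.fib (2 * k + 3) := by
  induction k with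
  | zero => decide
  | succ k ih =>
    have h := fib_step_aux k
    have e : 2 * (k + 1) + 1 = 2 * k + 3 := by ring
    rw [e]
    generalize Nat.fib (2 * (k + 1) + 3) = z at *
    generalize Nat.fib (2 * k + 3) = y at *
    generalize Nat.fib (2 * k + 1) = x at *
    zify at *
    have hz : (z : ℤ) = 3 * y - x := by linarith
    rw [hz]
    linarith

theorem markov_descent_aux (b : ℕ) : ∀ c : ℕ, 0 < b → b ≤ c →
    1 + b ^ 2 + c ^ 2 = 3 * b * c →
      (b = 1 ∧ c = 1) ∨ ∃ k : ℕ, b = Nat.fib (2 * k + 1) ∧ c = Nat.fib (2 * k + 3) := by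
  induction b using Nat.strong_induction_on with
  | _ b ih =>
    intro c hb hbc h
    by_cases h1 : b = 1
    · subst h1
      have : c < 3 := by nlinarith
      interval_cases c
      · left; simp
      · right; exact ⟨0, by decide, by decide⟩
    · have hb2 : 2 ≤ b := by omega
      have hlt : b < c := by
        rcases hbc.lt_or_eq with h' | h'
        · exact h'
        · subst h'; nlinarith
      have hc3 : c < 3 * b := by
        by_contra hh
        push Not at hh
        nlinarith
      obtain ⟨d, hd⟩ := Nat.exists_eq_add_of_lt hc3
      obtain ⟨x, hx⟩ : ∃ x, x = d + 1 := ⟨_, rfl⟩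
      have hs : c + x = 3 * b := by omega
      have hp : c * x = 1 + b ^ 2 := by nlinarith
      have hxb : x < b := by
        by_contra hh
        push Not at hh
        nlinarith
      have hm : 1 + x ^ 2 + b ^ 2 = 3 * x * b := by nlinarith
      rcases ih x hxb b (by omega) hxb.le hm with ⟨_, h'⟩ | ⟨k, hk1, hk2⟩
      · omega
      · right
        refine ⟨k + 1, hk2, ?_⟩
        have := fib_step_aux k
        omega

/-- Positive integers `b ≤ c` satisfy `1 + b² + c² = 3bc` if and only if
either `b = c = 1`, or `b = Fib (2k+1)` and `c = Fib (2k+3)` for some `k : ℕ`. -/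
theorem markov_one_iff_consecutive_odd_fib (b c : ℕ) (hb : 0 < b) (hc : 0 < c) (hbc : b ≤ c) :
    1 + b ^ 2 + c ^ 2 = 3 * b * c ↔
      (b = 1 ∧ c = 1) ∨ ∃ k : ℕ, b = Nat.fib (2 * k + 1) ∧ c = Nat.fib (2 * k + 3) := by
  constructor
  · exact markov_descent_aux b c hb hbc
  · rintro (⟨rfl, rfl⟩ | ⟨k, rfl, rfl⟩)
    · norm_num
    · exact fib_markov_aux k
end

section
/- Let r, a ∈ ℤ and let S be the primitive shear along (r,a). Then for every natural number m ≥ 1, the m-th iterate of S satisfies S^m(m·r², m·r·a − 1) = (0, −1). (This is the key computation showing that the nodal integral affine structure glued at a T-vertex of type (1/(mr²))(1, mra−1) is locally isomorphic to a boundary point of ℝ × ℝ≥0.) -/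
/-- The primitive shear along `(r, a)`:
`S(u) = u + det((r,a), u) · (r,a)`, i.e.
`S(x,y) = (x + (r·y − a·x)·r, y + (r·y − a·x)·a)`. -/
def primitiveShear (r a : ℤ) : ℤ × ℤ → ℤ × ℤ :=
  fun p => (p.1 + (r * p.2 - a * p.1) * r, p.2 + (r * p.2 - a * p.1) * a)

/-- For every `m ≥ 1`, the `m`-th iterate of the primitive shear along `(r,a)` sends
`(m·r², m·r·a − 1)` to `(0, −1)`. -/
theorem primitiveShear_iterate_eq_neg_one (r a : ℤ) (m : ℕ) (hm : 1 ≤ m) :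
    (primitiveShear r a)^[m] ((m : ℤ) * r ^ 2, (m : ℤ) * r * a - 1) = (0, -1) := by
  clear hm
  induction m with
  | zero => simp
  | succ k ih =>
    rw [Function.iterate_succ_apply, ← ih]
    congr 1
    simp only [primitiveShear, Prod.mk.injEq]
    push_cast
    constructor <;> ring
end

section
/- Define S : ℝ → ℝ by S(x) = (6x − 1)/x. Then: (i) S maps the interval (1,∞) into (5,6) and fixes 3 + 2√2; (ii) the images S^k([6,∞)) of the interval [6,∞) under the k-th iterates of S, for k ∈ ℕ, are pairwise disjoint; and (iii) their union over all k ∈ ℕ equals the open interval (3 + 2√2, ∞). -/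
open Set Function

/-- The "shift" map `S(x) = (6x − 1)/x` arising in the classification of perfect
exceptional classes of the first Hirzebruch surface. -/
noncomputable def shiftMap : ℝ → ℝ := fun x => (6 * x - 1) / x

lemma shift_sq {a : ℝ} (ha : a = 3 + 2 * Real.sqrt 2) : a * a = 6 * a - 1 ∧ 5 < a := by
  have h2 : Real.sqrt 2 * Real.sqrt 2 = 2 := Real.mul_self_sqrt (by norm_num)
  have h0 : 0 ≤ Real.sqrt 2 := Real.sqrt_nonneg 2
  subst ha
  constructor <;> nlinarith

lemma shift_maps {a : ℝ} (h1 : a * a = 6 * a - 1) (h2 : 5 < a) {x : ℝ} (hx : a < x) :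
    a < shiftMap x := by
  unfold shiftMap
  rw [lt_div_iff₀ (by linarith)]
  nlinarith

lemma shift_iter {a : ℝ} (h1 : a * a = 6 * a - 1) (h2 : 5 < a) (n : ℕ) :
    ∀ {x : ℝ}, a < x → a < shiftMap^[n] x := by
  induction n with
  | zero => intro x hx; simpa using hx
  | succ n ih =>
    intro x hx
    rw [Function.iterate_succ_apply]
    exact ih (shift_maps h1 h2 hx)

lemma shift_inj {x y : ℝ} (hx : 0 < x) (hy : 0 < y) (h : shiftMap x = shiftMap y) : x = y := by
  unfold shiftMap at h
  rw [div_eq_div_iff hx.ne' hy.ne'] at h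
  linarith

lemma shift_iter_inj {a : ℝ} (h1 : a * a = 6 * a - 1) (h2 : 5 < a) (n : ℕ) :
    ∀ {x y : ℝ}, a < x → a < y → shiftMap^[n] x = shiftMap^[n] y → x = y := by
  induction n with
  | zero => intro x y _ _ h; simpa using h
  | succ n ih =>
    intro x y hx hy h
    rw [Function.iterate_succ_apply, Function.iterate_succ_apply] at h
    exact shift_inj (by linarith) (by linarith)
      (ih (shift_maps h1 h2 hx) (shift_maps h1 h2 hy) h)

lemma shift_range {x : ℝ} (hx : 1 < x) : shiftMap x ∈ Set.Ioo (5 : ℝ) 6 := by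
  unfold shiftMap
  constructor
  · rw [lt_div_iff₀ (by linarith)]; linarith
  · rw [div_lt_iff₀ (by linarith)]; linarith

lemma shift_six {a : ℝ} (h1 : a * a = 6 * a - 1) (h2 : 5 < a) : a < 6 := by
  nlinarith

lemma shift_disj {a : ℝ} (h1 : a * a = 6 * a - 1) (h2 : 5 < a) {k l : ℕ} (hkl : k < l) :
    Disjoint (shiftMap^[k] '' Set.Ici (6 : ℝ)) (shiftMap^[l] '' Set.Ici (6 : ℝ)) := by
  have h6 := shift_six h1 h2
  rw [Set.disjoint_left]
  rintro _ ⟨x, hx, rfl⟩ ⟨y, hy, h⟩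
  rw [Set.mem_Ici] at hx hy
  obtain ⟨m, rfl⟩ := Nat.exists_eq_add_of_lt hkl
  rw [add_assoc, Function.iterate_add_apply] at h
  have hya : a < y := by linarith
  have hm := shift_iter h1 h2 m hya
  have e := shift_iter_inj h1 h2 k (shift_iter h1 h2 (m + 1) hya) (by linarith) h
  rw [Function.iterate_succ_apply'] at e
  have := (shift_range (x := shiftMap^[m] y) (by linarith)).2
  linarith

lemma shift_cover {a : ℝ} (h1 : a * a = 6 * a - 1) (h2 : 5 < a) (n : ℕ) :
    ∀ y : ℝ, a < y → 1 ≤ 2 ^ n * (y - a) → ∃ k : ℕ, ∃ x : ℝ, 6 ≤ x ∧ shiftMap^[k] x = y := by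
  induction n with
  | zero => intro y _ h; exact ⟨0, y, by simp at h; linarith, rfl⟩
  | succ n ih =>
    intro y hy h
    by_cases h6 : 6 ≤ y
    · exact ⟨0, y, h6, rfl⟩
    push Not at h6
    have hp : 0 < 6 - y := by linarith
    have key : a + 2 * (y - a) ≤ 1 / (6 - y) := by
      rw [le_div_iff₀ hp]
      nlinarith [mul_pos (sub_pos.2 hy) (sub_pos.2 hy), mul_pos (sub_pos.2 hy) hp]
    have hpow : (0 : ℝ) < 2 ^ n := by positivity
    obtain ⟨k, x, hx, e⟩ := ih (1 / (6 - y)) (by linarith) (by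
      rw [pow_succ] at h
      nlinarith [mul_le_mul_of_nonneg_left key hpow.le])
    refine ⟨k + 1, x, hx, ?_⟩
    rw [Function.iterate_succ_apply', e]
    unfold shiftMap
    field_simp
    ring

/-- The shift map `S(x) = (6x−1)/x` maps `(1,∞)` into `(5,6)` and fixes `3 + 2√2`;
the iterated images `S^[k] '' [6,∞)` are pairwise disjoint, and their union over all
`k : ℕ` is the open interval `(3 + 2√2, ∞)`. -/
theorem shiftMap_properties :
    (∀ x : ℝ, 1 < x → shiftMap x ∈ Set.Ioo (5 : ℝ) 6) ∧
    shiftMap (3 + 2 * Real.sqrt 2) = 3 + 2 * Real.sqrt 2 ∧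
    (∀ k l : ℕ, k ≠ l →
      Disjoint (shiftMap^[k] '' Set.Ici (6 : ℝ)) (shiftMap^[l] '' Set.Ici (6 : ℝ))) ∧
    (⋃ k : ℕ, shiftMap^[k] '' Set.Ici (6 : ℝ)) = Set.Ioi (3 + 2 * Real.sqrt 2) := by
  obtain ⟨h1, h2⟩ := shift_sq rfl
  refine ⟨fun x hx => shift_range hx, ?_, ?_, ?_⟩
  · generalize 3 + 2 * Real.sqrt 2 = a at *
    unfold shiftMap
    rw [div_eq_iff (by linarith)]
    linarith
  · intro k l hkl
    rcases lt_or_gt_of_ne hkl with h | h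
    · exact shift_disj h1 h2 h
    · exact (shift_disj h1 h2 h).symm
  · have h6 := shift_six h1 h2
    generalize 3 + 2 * Real.sqrt 2 = a at *
    ext y
    simp only [Set.mem_iUnion, Set.mem_image, Set.mem_Ici, Set.mem_Ioi]
    constructor
    · rintro ⟨k, x, hx, rfl⟩
      exact shift_iter h1 h2 k (by linarith)
    · intro hy
      have hd : 0 < y - a := sub_pos.2 hy
      obtain ⟨n, hn⟩ := pow_unbounded_of_one_lt (1 / (y - a)) (one_lt_two (α := ℝ))
      rw [div_lt_iff₀ hd] at hn
      exact shift_cover h1 h2 n y hy hn.le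
end

section
/- Define g : ℕ → ℤ by g(0) = 1, g(1) = 1, g(2) = 1, g(3) = 3 and g(k+4) = 6·g(k+2) − g(k); define the Pell numbers P by P(0) = 0, P(1) = 1, P(n+2) = 2·P(n+1) + P(n), and the half-companion Pell numbers H by H(0) = 1, H(1) = 1, H(n+2) = 2·H(n+1) + H(n). Then for every natural number j, g(2j+2) = P(2j+1) and g(2j+1) = H(2j). (The even-index entries of the sequence governing the staircase of CP¹(2) × CP¹(2) are the odd-index Pell numbers and the odd-index entries are the even-index half-companion Pell numbers.) -/
/-- The sequence controlling the staircase of `ℂP¹(2) × ℂP¹(2)`: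
seeds `1, 1, 1, 3` and recursion `g (k+4) = 6 · g (k+2) − g k`. -/
def gP1P1 : ℕ → ℤ
  | 0 => 1
  | 1 => 1
  | 2 => 1
  | 3 => 3
  | n + 4 => 6 * gP1P1 (n + 2) - gP1P1 n

/-- The Pell numbers: `P 0 = 0`, `P 1 = 1`, `P (n+2) = 2 · P (n+1) + P n`. -/
def pell : ℕ → ℤ
  | 0 => 0
  | 1 => 1
  | n + 2 => 2 * pell (n + 1) + pell n

/-- The half-companion Pell numbers: `H 0 = 1`, `H 1 = 1`,
`H (n+2) = 2 · H (n+1) + H n`. -/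
def halfPell : ℕ → ℤ
  | 0 => 1
  | 1 => 1
  | n + 2 => 2 * halfPell (n + 1) + halfPell n

theorem gP1P1_rec (n : ℕ) : gP1P1 (n + 4) = 6 * gP1P1 (n + 2) - gP1P1 n := by
  rw [gP1P1]

theorem pell_rec (n : ℕ) : pell (n + 2) = 2 * pell (n + 1) + pell n := by
  rw [pell]

theorem halfPell_rec (n : ℕ) : halfPell (n + 2) = 2 * halfPell (n + 1) + halfPell n := by
  rw [halfPell]

theorem pell_rec4 (n : ℕ) : pell (n + 4) = 6 * pell (n + 2) - pell n := by
  linarith [pell_rec n, pell_rec (n + 1), pell_rec (n + 2)]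

theorem halfPell_rec4 (n : ℕ) : halfPell (n + 4) = 6 * halfPell (n + 2) - halfPell n := by
  linarith [halfPell_rec n, halfPell_rec (n + 1), halfPell_rec (n + 2)]

/-- The even-index entries of the sequence governing the staircase of
`ℂP¹(2) × ℂP¹(2)` are the odd-index Pell numbers, and the odd-index entries are the
even-index half-companion Pell numbers. -/
theorem gP1P1_eq_pell (j : ℕ) :
    gP1P1 (2 * j + 2) = pell (2 * j + 1) ∧ gP1P1 (2 * j + 1) = halfPell (2 * j) := by
  induction j using Nat.twoStepInduction with
  | zero => simp [gP1P1, pell, halfPell]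
  | one => simp [gP1P1, pell, halfPell]
  | more n h0 h1 =>
    obtain ⟨a0, b0⟩ := h0
    obtain ⟨a1, b1⟩ := h1
    constructor
    · have e1 := gP1P1_rec (2 * n + 2)
      have e2 := pell_rec4 (2 * n + 1)
      have a1' : gP1P1 (2 * n + 2 + 2) = pell (2 * n + 1 + 2) := a1
      change gP1P1 (2 * n + 2 + 4) = pell (2 * n + 1 + 4)
      rw [e1, e2, a0, a1']
    · have e1 := gP1P1_rec (2 * n + 1)
      have e2 := halfPell_rec4 (2 * n)
      have b1' : gP1P1 (2 * n + 1 + 2) = halfPell (2 * n + 2) := b1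
      change gP1P1 (2 * n + 1 + 4) = halfPell (2 * n + 4)
      rw [e1, e2, b0, b1']
end

section
/- Let p, q, t be integers with t² = p² − 6pq + q² + 8. Then it is not the case that 8 divides both 3(p+q) + t and 3(p+q) − t. (Hence for each pair (p,q) at most one choice of sign ε ∈ {±1} makes d = (3(p+q) + εt)/8 an integer, so the data (d,m) of a perfect exceptional class in the first Hirzebruch surface is uniquely determined by (p,q), and the map Perf(F₁) → ℚ, (p,q,d,m) ↦ p/q, is injective.) -/
/-- If `p, q, t` are integers with `t² = p² − 6pq + q² + 8`, then `8` cannot divide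
both `3(p+q) + t` and `3(p+q) − t`. Hence at most one sign `ε ∈ {±1}` makes
`(3(p+q) + εt)/8` an integer. -/
theorem not_both_signs_divisible (p q t : ℤ)
    (ht : t ^ 2 = p ^ 2 - 6 * p * q + q ^ 2 + 8) :
    ¬((8 ∣ 3 * (p + q) + t) ∧ (8 ∣ 3 * (p + q) - t)) := by
  rintro ⟨⟨a, ha⟩, ⟨b, hb⟩⟩
  obtain ⟨s, hs⟩ : ∃ s, p + q = 4 * s := ⟨(p + q) / 4, by omega⟩
  obtain rfl : q = 4 * s - p := by omega
  obtain rfl : t = 4 * (3 * s - 2 * b) := by omega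
  have h : p ^ 2 + 1 = 4 * (p * s + 4 * s ^ 2 - 6 * s * b + 2 * b ^ 2) := by
    linarith
  rcases Int.even_or_odd' p with ⟨k, rfl | rfl⟩
  · have : 4 * (k ^ 2 - (2 * k * s + 4 * s ^ 2 - 6 * s * b + 2 * b ^ 2)) = -1 := by linarith
    omega
  · have : 4 * (k ^ 2 + k - ((2 * k + 1) * s + 4 * s ^ 2 - 6 * s * b + 2 * b ^ 2)) = -2 := by
      linarith
    omega
end
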